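/- For every integer N ≥ 2 there exists a constant C = C(N) with the following property. Let t₀ < T be reals, let u : ℝ² × [t₀,T] → ℝ² be a smooth vector field, 2π-periodic in each space variable, and let Φ : ℝ² × [t₀,T] → ℝ² be a smooth solution of ∂_t Φ + u·∇Φ = 0 with Φ(x,t₀) = x, such that Φ(x,t) − x is 2π-periodic in x. Then for every t ∈ [t₀,T]: ‖D^N Φ(·,t)‖_{C⁰} ≤ C (t−t₀) ‖D^N u‖_{C⁰} e^{C (t−t₀) ‖Du‖_{C⁰}}, where ‖D^j u‖_{C⁰} denotes the supremum over ℝ² × [t₀,T] of the norm of the j-th spatial derivative of u. -/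

import Mathlib

noncomputable section

open Real MeasureTheory
open scoped BigOperators

abbrev E2 : Type := EuclideanSpace ℝ (Fin 2)

/-- `‖Du‖_{C⁰}`: supremum over `x ∈ ℝ²`, `t ∈ [t₀,T]` of the norm of the spatial
derivative of `u`. -/
def supDu (u : E2 × ℝ → E2) (t₀ T : ℝ) : ℝ :=
  ⨆ (x : E2) (s : Set.Icc t₀ T), ‖fderiv ℝ (fun y => u (y, (s : ℝ))) x‖

/-- `‖D^N u‖_{C⁰}`: supremum over `x ∈ ℝ²`, `t ∈ [t₀,T]` of the norm of the `N`-th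
spatial derivative of `u`. -/
def supDNu (N : ℕ) (u : E2 × ℝ → E2) (t₀ T : ℝ) : ℝ :=
  ⨆ (x : E2) (s : Set.Icc t₀ T), ‖iteratedFDeriv ℝ N (fun y => u (y, (s : ℝ))) x‖

/-! Freezing the velocity at a point `x`, the transport equation gives
`D_t D^N Φ = D^N ((u(x) - u)·∇Φ)` at `x`, a Leibniz sum whose top-order term is at most
`N ‖Du‖ ‖D^N Φ‖` and whose other terms are products `‖D^{i+1} Φ‖ ‖D^{N-i} u‖` with `i + 1 < N`.
With `τ = t - t₀`, the factor `‖DΦ‖` (the case `i = 0`) is at most `exp (τ ‖Du‖)`, and by induction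
`‖D^{i+1} Φ‖ ≤ C τ ‖D^{i+1} u‖ exp (C τ ‖Du‖)` for `i ≥ 1`. Landau's inequality makes the sup norms
of the derivatives of `u` log-convex up to constants, so
`‖D^{i+1} u‖ ‖D^{N-i} u‖ ≲ ‖Du‖ ‖D^N u‖`, and `τ ‖Du‖` is swallowed by `exp (τ ‖Du‖)`. Grönwall's
inequality along characteristics concludes, because `D^N Φ` vanishes at time `t₀` for `N ≥ 2`. -/

open Filter Set Topology
open scoped NNReal

section Interpolation

theorem sq_le_of_forall_mul_le_add_sq {a b d : ℝ} (hb : 0 ≤ b) (hd : 0 ≤ d)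
    (h : ∀ r > 0, r * d ≤ 2 * a + r ^ 2 * b) : d ^ 2 ≤ 8 * (a * b) := by
  have ha : 0 ≤ a := by
    have hlim : Tendsto (fun r : ℝ => 2 * a + r ^ 2 * b) (𝓝[>] 0) (𝓝 (2 * a + 0 ^ 2 * b)) :=
      (Continuous.tendsto (by fun_prop) 0).mono_left nhdsWithin_le_nhds
    have : 0 ≤ 2 * a + 0 ^ 2 * b := ge_of_tendsto hlim <| by
      filter_upwards [self_mem_nhdsWithin] with r (hr : 0 < r)
      exact (mul_nonneg hr.le hd).trans (h r hr)
    linarith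
  have hdiscrim := discrim_le_zero (a := b) (b := -d) (c := 2 * a) fun r => by
    rcases le_or_gt r 0 with hr | hr
    · nlinarith [mul_nonneg hb (mul_self_nonneg r), mul_nonneg (neg_nonneg.2 hr) hd]
    · linarith [h r hr]
  unfold discrim at hdiscrim
  linarith

variable {E F : Type*} [NormedAddCommGroup E] [NormedSpace ℝ E]
  [NormedAddCommGroup F] [NormedSpace ℝ F]

theorem norm_sub_sub_fderiv_le_of_lipschitzWith {f : E → F} {B : ℝ≥0} (hf : Differentiable ℝ f)
    (hB : LipschitzWith B (fderiv ℝ f)) (x v : E) :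
    ‖f (x + v) - f x - fderiv ℝ f x v‖ ≤ B * ‖v‖ ^ 2 := by
  have h := (convex_closedBall x ‖v‖).norm_image_sub_le_of_norm_fderiv_le' (x := x) (y := x + v)
    (fun y _ => hf y)
    (fun y hy => (hB.norm_sub_le y x).trans (mul_le_mul_of_nonneg_left
      (mem_closedBall_iff_norm.1 hy) B.coe_nonneg))
    (by simp) (by simp)
  simpa [pow_two, mul_assoc] using h

theorem sq_norm_fderiv_le_of_lipschitzWith {f : E → F} {A : ℝ} {B : ℝ≥0}
    (hf : Differentiable ℝ f) (hA : ∀ x, ‖f x‖ ≤ A) (hB : LipschitzWith B (fderiv ℝ f)) (x : E) :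
    ‖fderiv ℝ f x‖ ^ 2 ≤ 8 * (A * B) := by
  have hA0 : 0 ≤ A := (norm_nonneg _).trans (hA x)
  refine sq_le_of_forall_mul_le_add_sq B.coe_nonneg (norm_nonneg _) fun r hr => ?_
  rw [mul_comm, ← le_div_iff₀ hr]
  refine ContinuousLinearMap.opNorm_le_of_unit_norm (by positivity) fun v hv => ?_
  rw [le_div_iff₀ hr]
  have hrv : ‖r • v‖ = r := by rw [norm_smul, hv, mul_one, Real.norm_of_nonneg hr.le]
  calc ‖fderiv ℝ f x v‖ * r = ‖fderiv ℝ f x (r • v)‖ := by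
        rw [map_smul, norm_smul, Real.norm_of_nonneg hr.le, mul_comm]
    _ = ‖f (x + r • v) - f x - (f (x + r • v) - f x - fderiv ℝ f x (r • v))‖ := by
        rw [sub_sub_cancel]
    _ ≤ ‖f (x + r • v)‖ + ‖f x‖ + ‖f (x + r • v) - f x - fderiv ℝ f x (r • v)‖ :=
        norm_sub_le_of_le (norm_sub_le _ _) le_rfl
    _ ≤ A + A + B * ‖r • v‖ ^ 2 := by
        gcongr
        exacts [hA _, hA _, norm_sub_sub_fderiv_le_of_lipschitzWith hf hB x (r • v)]
    _ = 2 * A + r ^ 2 * B := by rw [hrv]; ring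

theorem sq_norm_iteratedFDeriv_succ_le {f : E → F} {k : ℕ} {A B : ℝ}
    (hf : ContDiff ℝ (k + 2 : ℕ) f) (hA : ∀ x, ‖iteratedFDeriv ℝ k f x‖ ≤ A)
    (hB : ∀ x, ‖iteratedFDeriv ℝ (k + 2) f x‖ ≤ B) (x : E) :
    ‖iteratedFDeriv ℝ (k + 1) f x‖ ^ 2 ≤ 8 * (A * B) := by
  lift B to ℝ≥0 using (norm_nonneg _).trans (hB x)
  have hdiff : Differentiable ℝ (iteratedFDeriv ℝ (k + 1) f) :=
    hf.differentiable_iteratedFDeriv (mod_cast Nat.lt_succ_self (k + 1))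
  have hlip : LipschitzWith B (fderiv ℝ (iteratedFDeriv ℝ k f)) := by
    have hsucc : LipschitzWith B (iteratedFDeriv ℝ (k + 1) f) :=
      lipschitzWith_of_nnnorm_fderiv_le hdiff fun y => by
        rw [← NNReal.coe_le_coe, coe_nnnorm, norm_fderiv_iteratedFDeriv]
        exact hB y
    rw [fderiv_iteratedFDeriv]
    simpa using (LinearIsometryEquiv.lipschitz _).comp hsucc
  rw [← norm_fderiv_iteratedFDeriv]
  exact sq_norm_fderiv_le_of_lipschitzWith
    (hf.differentiable_iteratedFDeriv (mod_cast (by lia : k < k + 2))) hA hlip x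

end Interpolation

section LogConvexity

variable {a : ℕ → ℝ} {c : ℝ}

theorem one_mul_le_of_sq_le (ha : ∀ k, 0 ≤ a k) (hc : 0 ≤ c) {n : ℕ}
    (h : ∀ k < n, a (k + 1) ^ 2 ≤ c * (a k * a (k + 2))) :
    a 1 * a n ≤ c ^ n * (a 0 * a (n + 1)) := by
  induction n with
  | zero => simp [mul_comm]
  | succ n ih =>
    have hn := h n n.lt_succ_self
    have hrhs : 0 ≤ c ^ (n + 1) * (a 0 * a (n + 2)) :=
      mul_nonneg (pow_nonneg hc _) (mul_nonneg (ha _) (ha _))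
    rcases (ha n).eq_or_lt with h0 | hpos
    · have : a (n + 1) = 0 := by simpa [← h0, sq_nonpos_iff] using hn
      simpa [this] using hrhs
    rcases (ha (n + 1)).eq_or_lt with h0 | hpos'
    · simpa [← h0] using hrhs
    refine le_of_mul_le_mul_right ?_ (mul_pos hpos hpos')
    calc a 1 * a (n + 1) * (a n * a (n + 1)) = a 1 * a n * a (n + 1) ^ 2 := by ring
      _ ≤ c ^ n * (a 0 * a (n + 1)) * (c * (a n * a (n + 2))) :=
        mul_le_mul (ih fun k hk => h k (hk.trans n.lt_succ_self)) hn (sq_nonneg _)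
          (mul_nonneg (pow_nonneg hc _) (mul_nonneg (ha _) (ha _)))
      _ = c ^ (n + 1) * (a 0 * a (n + 2)) * (a n * a (n + 1)) := by ring

theorem mul_le_of_sq_le (ha : ∀ k, 0 ≤ a k) (hc : 0 ≤ c) {i j : ℕ}
    (h : ∀ k, k + 2 ≤ i + j → a (k + 1) ^ 2 ≤ c * (a k * a (k + 2))) :
    a i * a j ≤ c ^ (i * j) * (a 0 * a (i + j)) := by
  induction i generalizing a j with
  | zero => simp
  | succ i ih =>
    cases j with
    | zero => simp [mul_comm]
    | succ j =>
      calc a (i + 1) * a (j + 1) ≤ c ^ (i * j) * (a 1 * a (i + j + 1)) := by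
            simpa using ih (a := fun k => a (k + 1)) (fun k => ha _)
              (fun k hk => h (k + 1) (by lia))
        _ ≤ c ^ (i * j) * (c ^ (i + j + 1) * (a 0 * a (i + j + 2))) :=
            mul_le_mul_of_nonneg_left
              (one_mul_le_of_sq_le ha hc fun k hk => h k (by lia)) (pow_nonneg hc _)
        _ = c ^ ((i + 1) * (j + 1)) * (a 0 * a (i + 1 + (j + 1))) := by
            rw [← mul_assoc, ← pow_add, show i * j + (i + j + 1) = (i + 1) * (j + 1) by ring,
              show i + j + 2 = i + 1 + (j + 1) by ring]

end LogConvexity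

theorem gronwallBound_le {δ K ε x : ℝ} (hK : 0 ≤ K) (hε : 0 ≤ ε) :
    gronwallBound δ K ε x ≤ (δ + ε * x) * exp (K * x) := by
  rcases hK.eq_or_lt with rfl | hK
  · simp [gronwallBound_K0]
  have hexp : exp (K * x) - 1 ≤ K * x * exp (K * x) := by
    have h := mul_le_mul_of_nonneg_right (Real.one_sub_le_exp_neg (K * x)) (exp_pos (K * x)).le
    rw [← exp_add, neg_add_cancel, exp_zero] at h
    linarith
  rw [gronwallBound_of_K_ne_0 hK.ne']
  calc δ * exp (K * x) + ε / K * (exp (K * x) - 1)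
      ≤ δ * exp (K * x) + ε / K * (K * x * exp (K * x)) := by gcongr
    _ = (δ + ε * x) * exp (K * x) := by field_simp

section Commutation

variable {E F : Type*} [NormedAddCommGroup E] [NormedSpace ℝ E]
  [NormedAddCommGroup F] [NormedSpace ℝ F]

theorem fderiv_fderiv_apply_comm {f : E → F} {x : E} (hf : ContDiffAt ℝ 2 f x) (v w : E) :
    fderiv ℝ (fun y => fderiv ℝ f y v) x w = fderiv ℝ (fun y => fderiv ℝ f y w) x v := by
  have hdiff : DifferentiableAt ℝ (fderiv ℝ f) x :=
    (hf.fderiv_right (m := 1) le_rfl).differentiableAt one_ne_zero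
  simpa [fderiv_clm_apply hdiff (differentiableAt_const _)] using
    hf.isSymmSndFDerivAt (by simp) w v

theorem fderiv_iteratedFDeriv_apply_comm {f : E → F} {k : ℕ} (hf : ContDiff ℝ (k + 1 : ℕ) f)
    (x v : E) :
    fderiv ℝ (iteratedFDeriv ℝ k f) x v = iteratedFDeriv ℝ k (fun y => fderiv ℝ f y v) x := by
  induction k generalizing x with
  | zero => simp [iteratedFDeriv_zero_eq_comp, LinearIsometryEquiv.comp_fderiv]
  | succ k ih =>
    have hk : ContDiff ℝ 2 (iteratedFDeriv ℝ k f) :=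
      hf.iteratedFDeriv_right (by norm_cast; lia)
    have hdiff : Differentiable ℝ (fderiv ℝ (iteratedFDeriv ℝ k f)) :=
      (hk.fderiv_right (m := 1) le_rfl).differentiable one_ne_zero
    have hcomm : (fun y => fderiv ℝ (iteratedFDeriv ℝ k f) y v) =
        iteratedFDeriv ℝ k (fun y => fderiv ℝ f y v) :=
      funext fun y => ih (hf.of_le (mod_cast (k + 1).le_succ)) y
    ext m
    calc fderiv ℝ (iteratedFDeriv ℝ (k + 1) f) x v m
        = fderiv ℝ (fun y => fderiv ℝ (iteratedFDeriv ℝ k f) y (m 0) (Fin.tail m)) x v := by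
          simp_rw [← iteratedFDeriv_succ_apply_left]
          exact (fderiv_continuousMultilinear_apply_const_apply
            (hf.differentiable_iteratedFDeriv (mod_cast (k + 1).lt_succ_self) x) m v).symm
      _ = fderiv ℝ (fun y => fderiv ℝ (iteratedFDeriv ℝ k f) y (m 0)) x v (Fin.tail m) :=
          fderiv_continuousMultilinear_apply_const_apply
            ((hdiff x).clm_apply (differentiableAt_const _)) _ v
      _ = iteratedFDeriv ℝ (k + 1) (fun y => fderiv ℝ f y v) x m := by
          rw [iteratedFDeriv_succ_apply_left, ← hcomm, fderiv_fderiv_apply_comm hk.contDiffAt]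

theorem norm_iteratedFDeriv_succ_const_sub (k : ℕ) (f : E → F) (c : F) (x : E) :
    ‖iteratedFDeriv ℝ (k + 1) (fun y => c - f y) x‖ = ‖iteratedFDeriv ℝ (k + 1) f x‖ := by
  have hneg : fderiv ℝ (fun y => c - f y) = -fderiv ℝ f := funext fun _ => fderiv_const_sub c
  rw [← norm_iteratedFDeriv_fderiv, hneg, iteratedFDeriv_neg_apply, norm_neg,
    norm_iteratedFDeriv_fderiv]

end Commutation

section Slab

variable {X V : Type*} [SeminormedAddCommGroup V]

/-- The `C⁰` norm over the slab `X × [t₀, T]`; it is only meaningful for a function satisfying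
`BoundedOnSlab`, since a real supremum that does not exist is `0`. -/
def slabSupNorm (G : X × ℝ → V) (t₀ T : ℝ) : ℝ :=
  ⨆ (x : X) (s : Icc t₀ T), ‖G (x, s)‖

/-- Boundedness over the slab `X × [t₀, T]`, i.e. finiteness of the `C⁰` norm there. -/
def BoundedOnSlab (G : X × ℝ → V) (t₀ T : ℝ) : Prop :=
  ∃ M, ∀ x, ∀ t ∈ Icc t₀ T, ‖G (x, t)‖ ≤ M

theorem slabSupNorm_nonneg (G : X × ℝ → V) (t₀ T : ℝ) : 0 ≤ slabSupNorm G t₀ T :=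
  Real.iSup_nonneg fun _ => Real.iSup_nonneg fun _ => norm_nonneg _

theorem BoundedOnSlab.norm_le_slabSupNorm {G : X × ℝ → V} {t₀ T : ℝ} (hG : BoundedOnSlab G t₀ T)
    (x : X) {t : ℝ} (ht : t ∈ Icc t₀ T) : ‖G (x, t)‖ ≤ slabSupNorm G t₀ T := by
  obtain ⟨M, hM⟩ := hG
  have hM0 : 0 ≤ M := (norm_nonneg _).trans (hM x t ht)
  have hx : BddAbove (range fun s : Icc t₀ T => ‖G (x, s)‖) :=
    ⟨M, forall_mem_range.2 fun s => hM x s s.2⟩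
  have hsup : BddAbove (range fun y : X => ⨆ s : Icc t₀ T, ‖G (y, s)‖) :=
    ⟨M, forall_mem_range.2 fun y => Real.iSup_le (fun s => hM y s s.2) hM0⟩
  exact (le_ciSup hx ⟨t, ht⟩).trans (le_ciSup hsup x)

theorem slabSupNorm_le {G : X × ℝ → V} {t₀ T M : ℝ} (hM0 : 0 ≤ M)
    (hM : ∀ x, ∀ t ∈ Icc t₀ T, ‖G (x, t)‖ ≤ M) : slabSupNorm G t₀ T ≤ M :=
  Real.iSup_le (fun x => Real.iSup_le (fun s => hM x s s.2) hM0) hM0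

end Slab

section MaterialDerivative

variable {E F : Type*} [NormedAddCommGroup E] [NormedSpace ℝ E]
  [NormedAddCommGroup F] [NormedSpace ℝ F]

/-- The slice-wise spatial derivative `D^k f(·, t)` at `x`, as a function of `p = (x, t)`. -/
def spatialDeriv (k : ℕ) (f : E × ℝ → F) (p : E × ℝ) : E [×k]→L[ℝ] F :=
  iteratedFDeriv ℝ k (fun y => f (y, p.2)) p.1

/-- The material derivative `D_t G = ∂_t G + u·∇G`, see `materialDeriv_apply`. -/
def materialDeriv (u : E × ℝ → E) (G : E × ℝ → F) (p : E × ℝ) : F :=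
  fderiv ℝ G p (u p, 1)

theorem contDiff_slice {n : WithTop ℕ∞} {f : E × ℝ → F} (hf : ContDiff ℝ n f) (t : ℝ) :
    ContDiff ℝ n fun y => f (y, t) :=
  hf.comp (contDiff_prodMk_left t)

theorem lipschitzWith_slice_of_norm_spatialDeriv_one_le {u : E × ℝ → F} {t : ℝ} {K : ℝ≥0}
    (hu : ContDiff ℝ 1 u) (hK : ∀ x, ‖spatialDeriv 1 u (x, t)‖ ≤ K) :
    LipschitzWith K fun y => u (y, t) :=
  lipschitzWith_of_nnnorm_fderiv_le ((contDiff_slice hu t).differentiable one_ne_zero) fun x => by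
    rw [← NNReal.coe_le_coe, coe_nnnorm, ← norm_iteratedFDeriv_one]
    exact hK x

theorem sq_slabSupNorm_spatialDeriv_succ_le {u : E × ℝ → F} {k : ℕ} {t₀ T : ℝ}
    (hu : ContDiff ℝ (k + 2 : ℕ) u) (hk : BoundedOnSlab (spatialDeriv k u) t₀ T)
    (hk₂ : BoundedOnSlab (spatialDeriv (k + 2) u) t₀ T) :
    slabSupNorm (spatialDeriv (k + 1) u) t₀ T ^ 2 ≤
      8 * (slabSupNorm (spatialDeriv k u) t₀ T * slabSupNorm (spatialDeriv (k + 2) u) t₀ T) := by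
  have hrhs := mul_nonneg (slabSupNorm_nonneg (spatialDeriv k u) t₀ T)
    (slabSupNorm_nonneg (spatialDeriv (k + 2) u) t₀ T)
  refine (Real.le_sqrt (slabSupNorm_nonneg _ _ _) (by linarith)).1 <|
    slabSupNorm_le (Real.sqrt_nonneg _) fun x t ht => Real.le_sqrt_of_sq_le ?_
  exact sq_norm_iteratedFDeriv_succ_le (contDiff_slice hu t)
    (fun y => hk.norm_le_slabSupNorm y ht) (fun y => hk₂.norm_le_slabSupNorm y ht) x

theorem spatialDeriv_eq_compContinuousLinearMap {f : E × ℝ → F} {k : ℕ} (hf : ContDiff ℝ k f)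
    (p : E × ℝ) :
    spatialDeriv k f p = (iteratedFDeriv ℝ k f p).compContinuousLinearMap
      fun _ => ContinuousLinearMap.inl ℝ E ℝ := by
  have hslice : (fun y => f (y, p.2)) =
      (fun q => f (q + (0, p.2))) ∘ ContinuousLinearMap.inl ℝ E ℝ := by ext; simp
  have hshift : ContDiff ℝ k fun q => f (q + ((0 : E), p.2)) :=
    hf.comp (contDiff_id.add contDiff_const)
  rw [spatialDeriv, hslice, ContinuousLinearMap.iteratedFDeriv_comp_right _ hshift _ le_rfl,
    iteratedFDeriv_comp_add_right]
  simp

theorem contDiff_spatialDeriv {f : E × ℝ → F} {k : ℕ} {m n : WithTop ℕ∞} (hf : ContDiff ℝ n f)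
    (hmk : m + k ≤ n) : ContDiff ℝ m (spatialDeriv k f) := by
  rw [funext (spatialDeriv_eq_compContinuousLinearMap (hf.of_le (le_add_self.trans hmk)))]
  exact (ContinuousMultilinearMap.compContinuousLinearMapL (𝕜 := ℝ)
    fun _ : Fin k => ContinuousLinearMap.inl ℝ E ℝ).contDiff.comp
    (hf.iteratedFDeriv_right hmk)

theorem fderiv_spatialDeriv_apply {f : E × ℝ → F} {k : ℕ} (hf : ContDiff ℝ (k + 1 : ℕ) f)
    (p v : E × ℝ) :
    fderiv ℝ (spatialDeriv k f) p v = spatialDeriv k (fun q => fderiv ℝ f q v) p := by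
  have hf' : ContDiff ℝ k fun q => fderiv ℝ f q v :=
    (hf.fderiv_right (by norm_cast)).clm_apply contDiff_const
  rw [spatialDeriv_eq_compContinuousLinearMap hf', ← fderiv_iteratedFDeriv_apply_comm hf,
    funext (spatialDeriv_eq_compContinuousLinearMap (hf.of_le (mod_cast k.le_succ)))]
  have hcomp := (ContinuousMultilinearMap.compContinuousLinearMapL (F := F)
    fun _ : Fin k => ContinuousLinearMap.inl ℝ E ℝ).hasFDerivAt.comp p
      (hf.differentiable_iteratedFDeriv (mod_cast k.lt_succ_self) p).hasFDerivAt
  exact DFunLike.congr_fun hcomp.fderiv v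

theorem fderiv_slice_apply {f : E × ℝ → F} {x : E} {t : ℝ} (hf : DifferentiableAt ℝ f (x, t))
    (v : E) : fderiv ℝ (fun y => f (y, t)) x v = fderiv ℝ f (x, t) (v, 0) := by
  have h : HasFDerivAt (fun y => f (y, t)) _ x :=
    hf.hasFDerivAt.comp x (hasFDerivAt_prodMk_left x t)
  simp [h.fderiv]

theorem deriv_slice {f : E × ℝ → F} {x : E} {t : ℝ} (hf : DifferentiableAt ℝ f (x, t)) :
    deriv (fun s => f (x, s)) t = fderiv ℝ f (x, t) (0, 1) :=
  (hf.hasFDerivAt.comp_hasDerivAt t ((hasDerivAt_const t x).prodMk (hasDerivAt_id t))).deriv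

theorem materialDeriv_apply {u : E × ℝ → E} {G : E × ℝ → F} {x : E} {t : ℝ}
    (hG : DifferentiableAt ℝ G (x, t)) :
    materialDeriv u G (x, t) =
      deriv (fun s => G (x, s)) t + fderiv ℝ (fun y => G (y, t)) x (u (x, t)) := by
  rw [deriv_slice hG, fderiv_slice_apply hG, ← map_add]
  simp [materialDeriv]

theorem norm_materialDeriv_spatialDeriv_le {u : E × ℝ → E} {Φ : E × ℝ → F} {N : ℕ} {t : ℝ}
    (hu : ContDiff ℝ N u) (hΦ : ContDiff ℝ (N + 1 : ℕ) Φ)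
    (htransport : ∀ y, materialDeriv u Φ (y, t) = 0) (x : E) :
    ‖materialDeriv u (spatialDeriv N Φ) (x, t)‖ ≤ ∑ i ∈ Finset.range N,
      N.choose i * (‖spatialDeriv (i + 1) Φ (x, t)‖ * ‖spatialDeriv (N - i) u (x, t)‖) := by
  have hdiff : Differentiable ℝ Φ := hΦ.differentiable (by simp)
  -- Freeze the velocity at `x`: then `D_t D^N Φ = D^N ((u(x) - u)·∇Φ)`, whose Leibniz term
  -- with no derivative on the velocity difference vanishes at `x`.
  have hfrozen : (fun y => fderiv ℝ Φ (y, t) (u (x, t), 1)) =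
      fun y => fderiv ℝ (fun z => Φ (z, t)) y (u (x, t) - u (y, t)) := by
    ext y
    rw [fderiv_slice_apply (hdiff _), ← sub_eq_zero, ← map_sub, ← htransport y]
    simp [materialDeriv]
  rw [materialDeriv, fderiv_spatialDeriv_apply hΦ, spatialDeriv, hfrozen]
  refine (norm_iteratedFDeriv_clm_apply (n := N) ((contDiff_slice hΦ t).fderiv_right (by norm_cast))
    (contDiff_const.sub (contDiff_slice hu t)) x le_rfl).trans ?_
  have hlast : ‖iteratedFDeriv ℝ (N - N) (fun y => u (x, t) - u (y, t)) x‖ = 0 := by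
    rw [Nat.sub_self]; simp
  rw [Finset.sum_range_succ, hlast, mul_zero, add_zero]
  refine (Finset.sum_congr rfl fun i hi => ?_).le
  obtain ⟨j, hj⟩ := Nat.exists_eq_add_of_lt (Finset.mem_range.1 hi)
  rw [mul_assoc, norm_iteratedFDeriv_fderiv, show N - i = j + 1 by lia,
    norm_iteratedFDeriv_succ_const_sub]
  rfl

end MaterialDerivative

section Characteristics

variable {E F : Type*} [NormedAddCommGroup E] [NormedSpace ℝ E] [CompleteSpace E]
  [NormedAddCommGroup F] [NormedSpace ℝ F]

theorem exists_characteristic {u : E × ℝ → E} {t₀ t L : ℝ} {K : ℝ≥0} (hu : Continuous u)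
    (hK : ∀ s ∈ Icc t₀ t, LipschitzWith K fun y => u (y, s))
    (hL : ∀ x, ∀ s ∈ Icc t₀ t, ‖u (x, s)‖ ≤ L) (ht : t₀ ≤ t) (x : E) :
    ∃ γ : ℝ → E, γ t = x ∧
      ∀ s ∈ Icc t₀ t, HasDerivWithinAt γ (u (γ s, s)) (Icc t₀ t) s := by
  lift L to ℝ≥0 using (norm_nonneg _).trans (hL x t (right_mem_Icc.2 ht))
  have hPL : IsPicardLindelof (fun s y => u (y, s)) (tmin := t₀) (tmax := t)
      ⟨t, right_mem_Icc.2 ht⟩ x (L * (t - t₀).toNNReal) 0 L K :=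
    { lipschitzOnWith := fun s hs => (hK s hs).lipschitzOnWith
      continuousOn := fun y _ => (hu.comp (by fun_prop)).continuousOn
      norm_le := fun s hs y _ => hL y s hs
      mul_max_le := by simp [ht] }
  exact hPL.exists_eq_forall_mem_Icc_hasDerivWithinAt₀

theorem norm_le_of_norm_materialDeriv_le {u : E × ℝ → E} {G : E × ℝ → F} {t₀ t L a ε c : ℝ}
    {K : ℝ≥0} (hu : Continuous u) (hK : ∀ s ∈ Icc t₀ t, LipschitzWith K fun y => u (y, s))
    (hL : ∀ x, ∀ s ∈ Icc t₀ t, ‖u (x, s)‖ ≤ L) (hG : Differentiable ℝ G) (ha : 0 ≤ a)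
    (hε : 0 ≤ ε) (hinit : ∀ x, ‖G (x, t₀)‖ ≤ c)
    (hderiv : ∀ x, ∀ s ∈ Icc t₀ t, ‖materialDeriv u G (x, s)‖ ≤ a * ‖G (x, s)‖ + ε)
    (ht : t₀ ≤ t) (x : E) :
    ‖G (x, t)‖ ≤ (c + ε * (t - t₀)) * exp (a * (t - t₀)) := by
  obtain ⟨γ, rfl, hγ⟩ := exists_characteristic hu hK hL ht x
  have hGγ : ∀ s ∈ Icc t₀ t, HasDerivWithinAt (fun s => G (γ s, s))
      (materialDeriv u G (γ s, s)) (Icc t₀ t) s := fun s hs =>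
    (hG (γ s, s)).hasFDerivAt.comp_hasDerivWithinAt (f := fun s => (γ s, s)) s
      ((hγ s hs).prodMk (hasDerivWithinAt_id s _))
  have hgronwall := norm_le_gronwallBound_of_norm_deriv_right_le
    (fun s hs => (hGγ s hs).continuousWithinAt)
    (fun s hs => (hGγ s (Ico_subset_Icc_self hs)).mono_of_mem_nhdsWithin
      (Icc_mem_nhdsGE_of_mem hs))
    (hinit (γ t₀)) (fun s hs => hderiv (γ s) s (Ico_subset_Icc_self hs)) t (right_mem_Icc.2 ht)
  exact hgronwall.trans (gronwallBound_le ha hε)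

end Characteristics

/-- The constant `C(N)` of the estimate. The first term absorbs the `N‖Du‖` of the Grönwall
exponent, the second one the Leibniz sum: `2 ^ N` for the binomial coefficients and a power of `8`
for the interpolation of the sup norms of the derivatives of `u`. -/
def backToLabelsConst : ℕ → ℝ
  | 0 => 1
  | n + 1 => n + 2 + 2 ^ (n + 1) * 8 ^ (n ^ 2) * backToLabelsConst n

theorem one_le_backToLabelsConst (n : ℕ) : 1 ≤ backToLabelsConst n := by
  induction n with
  | zero => exact le_rfl
  | succ n ih =>
    have : 0 ≤ 2 ^ (n + 1) * 8 ^ (n ^ 2) * backToLabelsConst n := by positivity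
    rw [backToLabelsConst]
    linarith [n.cast_nonneg (α := ℝ)]

theorem add_backToLabelsConst_le_succ (n : ℕ) :
    n + 2 + backToLabelsConst n ≤ backToLabelsConst (n + 1) := by
  have hcoef : (1 : ℝ) ≤ 2 ^ (n + 1) * 8 ^ (n ^ 2) :=
    one_le_mul_of_one_le_of_one_le (one_le_pow₀ one_le_two) (one_le_pow₀ (by norm_num))
  exact add_le_add_right
    (le_mul_of_one_le_left (zero_le_one.trans (one_le_backToLabelsConst n)) hcoef) _

theorem backToLabelsConst_mono : Monotone backToLabelsConst :=
  monotone_nat_of_le_succ fun n => by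
    linarith [add_backToLabelsConst_le_succ n, n.cast_nonneg (α := ℝ)]

theorem mul_exp_le_backToLabelsConst {n : ℕ} {τ U₁ U : ℝ} (hτ : 0 ≤ τ) (hU₁ : 0 ≤ U₁)
    (hU : 0 ≤ U) :
    2 ^ (n + 1) * (8 ^ (n ^ 2) * backToLabelsConst n * U *
        exp ((backToLabelsConst n + 1) * τ * U₁)) * τ * exp ((n + 1) * U₁ * τ) ≤
      backToLabelsConst (n + 1) * τ * U * exp (backToLabelsConst (n + 1) * τ * U₁) := by
  have hcoef : 2 ^ (n + 1) * 8 ^ (n ^ 2) * backToLabelsConst n ≤ backToLabelsConst (n + 1) := by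
    rw [backToLabelsConst]
    linarith [n.cast_nonneg (α := ℝ)]
  have hC := zero_le_one.trans (one_le_backToLabelsConst (n + 1))
  calc _ = 2 ^ (n + 1) * 8 ^ (n ^ 2) * backToLabelsConst n * τ * U *
        exp ((n + 2 + backToLabelsConst n) * τ * U₁) := by
        rw [show (n + 2 + backToLabelsConst n) * τ * U₁ =
          (backToLabelsConst n + 1) * τ * U₁ + (n + 1) * U₁ * τ by ring, exp_add]
        ring
    _ ≤ _ := by
      gcongr
      exact add_backToLabelsConst_le_succ n

section LeibnizSum

variable {U P : ℕ → ℝ} {n : ℕ} {τ : ℝ}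

theorem succ_mul_succ_sub_le (hU : ∀ k, 0 ≤ U k)
    (hlogconvex : ∀ k, k + 2 ≤ n → U (k + 2) ^ 2 ≤ 8 * (U (k + 1) * U (k + 3)))
    {i : ℕ} (hi : i ≤ n) :
    U (i + 1) * U (n + 1 - i) ≤ 8 ^ (n ^ 2) * (U 1 * U (n + 1)) := by
  have hUU := mul_nonneg (hU 1) (hU (n + 1))
  have h := mul_le_of_sq_le (a := fun k => U (k + 1)) (i := i) (j := n - i) (fun k => hU _)
    (by norm_num) (fun k hk => hlogconvex k (by lia))
  rw [Nat.add_sub_cancel' hi, ← Nat.sub_add_comm hi] at h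
  have hexponent : i * (n - i) ≤ n ^ 2 := (Nat.mul_le_mul hi (n.sub_le i)).trans_eq (sq n).symm
  exact h.trans (mul_le_mul_of_nonneg_right (pow_le_pow_right₀ (by norm_num) hexponent) hUU)

theorem leibniz_term_le (hU : ∀ k, 0 ≤ U k) (hτ : 0 ≤ τ)
    (hlogconvex : ∀ k, k + 2 ≤ n → U (k + 2) ^ 2 ≤ 8 * (U (k + 1) * U (k + 3)))
    (hP₁ : P 1 ≤ exp (τ * U 1))
    (hP : ∀ j, 2 ≤ j → j ≤ n → P j ≤ backToLabelsConst j * τ * U j *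
      exp (backToLabelsConst j * τ * U 1)) {i : ℕ} (hi : i < n) :
    P (i + 1) * U (n + 1 - i) ≤ 8 ^ (n ^ 2) * backToLabelsConst n * U (n + 1) *
      exp ((backToLabelsConst n + 1) * τ * U 1) := by
  have hC := one_le_backToLabelsConst n
  have hU₁ := hU 1
  have hUn := hU (n + 1)
  rcases i.eq_zero_or_pos with rfl | hi₀
  · have hcoef : 1 ≤ 8 ^ (n ^ 2) * backToLabelsConst n :=
      one_le_mul_of_one_le_of_one_le (one_le_pow₀ (by norm_num)) hC
    calc P 1 * U (n + 1) ≤ 1 * U (n + 1) * exp (1 * τ * U 1) := by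
          rw [one_mul, one_mul, mul_comm]; gcongr
      _ ≤ 8 ^ (n ^ 2) * backToLabelsConst n * U (n + 1) *
          exp ((backToLabelsConst n + 1) * τ * U 1) := by gcongr; linarith
  have hUU := succ_mul_succ_sub_le hU hlogconvex hi.le
  have hPi : P (i + 1) ≤ backToLabelsConst n * τ * U (i + 1) *
      exp (backToLabelsConst n * τ * U 1) := by
    have := hU (i + 1)
    have hmono := backToLabelsConst_mono hi
    exact (hP (i + 1) (by lia) hi).trans (by gcongr)
  have hexp : τ * U 1 ≤ exp (τ * U 1) := (lt_add_one _).le.trans (add_one_le_exp _)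
  calc P (i + 1) * U (n + 1 - i)
      ≤ backToLabelsConst n * τ * U (i + 1) * exp (backToLabelsConst n * τ * U 1) *
          U (n + 1 - i) := mul_le_mul_of_nonneg_right hPi (hU _)
    _ = backToLabelsConst n * τ * exp (backToLabelsConst n * τ * U 1) *
          (U (i + 1) * U (n + 1 - i)) := by ring
    _ ≤ backToLabelsConst n * τ * exp (backToLabelsConst n * τ * U 1) *
          (8 ^ (n ^ 2) * (U 1 * U (n + 1))) := by gcongr
    _ = 8 ^ (n ^ 2) * backToLabelsConst n * U (n + 1) *
          (exp (backToLabelsConst n * τ * U 1) * (τ * U 1)) := by ring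
    _ ≤ 8 ^ (n ^ 2) * backToLabelsConst n * U (n + 1) *
          (exp (backToLabelsConst n * τ * U 1) * exp (τ * U 1)) := by gcongr
    _ = 8 ^ (n ^ 2) * backToLabelsConst n * U (n + 1) *
          exp ((backToLabelsConst n + 1) * τ * U 1) := by rw [← exp_add]; ring_nf

theorem leibniz_sum_le (hU : ∀ k, 0 ≤ U k) (hτ : 0 ≤ τ)
    (hlogconvex : ∀ k, k + 2 ≤ n → U (k + 2) ^ 2 ≤ 8 * (U (k + 1) * U (k + 3)))
    (hP₁ : P 1 ≤ exp (τ * U 1))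
    (hP : ∀ j, 2 ≤ j → j ≤ n → P j ≤ backToLabelsConst j * τ * U j *
      exp (backToLabelsConst j * τ * U 1)) :
    ∑ i ∈ Finset.range n, ((n + 1).choose i : ℝ) * (P (i + 1) * U (n + 1 - i)) ≤
      2 ^ (n + 1) * (8 ^ (n ^ 2) * backToLabelsConst n * U (n + 1) *
        exp ((backToLabelsConst n + 1) * τ * U 1)) := by
  have hC := one_le_backToLabelsConst n
  have hbound : 0 ≤ 8 ^ (n ^ 2) * backToLabelsConst n * U (n + 1) *
      exp ((backToLabelsConst n + 1) * τ * U 1) := by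
    have := hU (n + 1)
    positivity
  have hchoose : ∑ i ∈ Finset.range n, ((n + 1).choose i : ℝ) ≤ 2 ^ (n + 1) := by
    rw [← Nat.cast_sum]
    exact_mod_cast (Finset.sum_le_sum_of_subset (Finset.range_mono (by lia))).trans
      (Nat.sum_range_choose (n + 1)).le
  calc ∑ i ∈ Finset.range n, ((n + 1).choose i : ℝ) * (P (i + 1) * U (n + 1 - i))
      ≤ ∑ i ∈ Finset.range n, ((n + 1).choose i : ℝ) * _ := Finset.sum_le_sum fun i hi =>
        mul_le_mul_of_nonneg_left (leibniz_term_le hU hτ hlogconvex hP₁ hP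
          (Finset.mem_range.1 hi)) (Nat.cast_nonneg _)
    _ ≤ _ := by
      rw [← Finset.sum_mul]
      exact mul_le_mul_of_nonneg_right hchoose hbound

end LeibnizSum

section Estimate

variable {E F : Type*} [NormedAddCommGroup E] [NormedSpace ℝ E] [CompleteSpace E]
  [NormedAddCommGroup F] [NormedSpace ℝ F]

theorem norm_spatialDeriv_le_of_lower_terms_le {u : E × ℝ → E} {Φ : E × ℝ → F} {n : ℕ}
    {t₀ t T ε c : ℝ} (hu : ContDiff ℝ (n + 1 : ℕ) u) (hΦ : ContDiff ℝ (n + 2 : ℕ) Φ)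
    (hu₀ : BoundedOnSlab u t₀ T) (hu₁ : BoundedOnSlab (spatialDeriv 1 u) t₀ T)
    (htransport : ∀ x, ∀ s ∈ Icc t₀ T, materialDeriv u Φ (x, s) = 0)
    (ht : t ∈ Icc t₀ T) (hinit : ∀ x, ‖spatialDeriv (n + 1) Φ (x, t₀)‖ ≤ c)
    (hlower : ∀ x, ∀ s ∈ Icc t₀ t, ∑ i ∈ Finset.range n, (n + 1).choose i *
      (‖spatialDeriv (i + 1) Φ (x, s)‖ * ‖spatialDeriv (n + 1 - i) u (x, s)‖) ≤ ε) (x : E) :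
    ‖spatialDeriv (n + 1) Φ (x, t)‖ ≤ (c + ε * (t - t₀)) *
      exp ((n + 1) * slabSupNorm (spatialDeriv 1 u) t₀ T * (t - t₀)) := by
  have hsub : Icc t₀ t ⊆ Icc t₀ T := Icc_subset_Icc_right ht.2
  have hU₁ := slabSupNorm_nonneg (spatialDeriv 1 u) t₀ T
  have hε : 0 ≤ ε :=
    (Finset.sum_nonneg fun _ _ => by positivity).trans (hlower x t (right_mem_Icc.2 ht.1))
  refine norm_le_of_norm_materialDeriv_le (K := ⟨_, hU₁⟩) hu.continuous
    (fun s hs => lipschitzWith_slice_of_norm_spatialDeriv_one_le (hu.of_le (by norm_cast; lia))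
      fun y => hu₁.norm_le_slabSupNorm y (hsub hs))
    (fun y s hs => hu₀.norm_le_slabSupNorm y (hsub hs))
    ((contDiff_spatialDeriv (m := 1) hΦ (by norm_cast; lia)).differentiable one_ne_zero)
    (by positivity) hε hinit (fun y s hs => ?_) ht.1 x
  refine (norm_materialDeriv_spatialDeriv_le hu hΦ
    (fun z => htransport z s (hsub hs)) y).trans ?_
  have hDu := hu₁.norm_le_slabSupNorm y (hsub hs)
  rw [Finset.sum_range_succ, add_comm]
  refine add_le_add ?_ (hlower y s hs)
  rw [Nat.choose_succ_self_right, Nat.add_sub_cancel_left, mul_comm ‖_‖, ← mul_assoc]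
  push_cast
  gcongr

end Estimate

section BackToLabels

variable {E : Type*} [NormedAddCommGroup E] [NormedSpace ℝ E] {u Φ : E × ℝ → E} {t₀ T : ℝ}

theorem norm_spatialDeriv_one_le_one_of_eq_id (hinit : ∀ x, Φ (x, t₀) = x) (x : E) :
    ‖spatialDeriv 1 Φ (x, t₀)‖ ≤ 1 := by
  simpa [spatialDeriv, hinit, norm_iteratedFDeriv_one] using ContinuousLinearMap.norm_id_le

theorem spatialDeriv_eq_zero_of_eq_id (hinit : ∀ x, Φ (x, t₀) = x) {k : ℕ} (hk : 2 ≤ k) (x : E) :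
    spatialDeriv k Φ (x, t₀) = 0 := by
  obtain ⟨n, rfl⟩ := Nat.exists_eq_add_of_le' hk
  have hfderiv : fderiv ℝ (fun y : E => y) = fun _ => ContinuousLinearMap.id ℝ E :=
    funext fun _ => fderiv_fun_id
  rw [← norm_eq_zero]
  simp [spatialDeriv, hinit, ← norm_iteratedFDeriv_fderiv (n := n + 1), hfderiv,
    iteratedFDeriv_succ_const]

theorem leibniz_sum_spatialDeriv_le {n : ℕ} {x : E} {s τ : ℝ}
    (hu : ContDiff ℝ (n + 1 : ℕ) u)
    (hbounded : ∀ k ≤ n + 1, BoundedOnSlab (spatialDeriv k u) t₀ T) (hs : s ∈ Icc t₀ T)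
    (hsτ : s - t₀ ≤ τ)
    (hΦ₁ : ‖spatialDeriv 1 Φ (x, s)‖ ≤ exp ((s - t₀) * slabSupNorm (spatialDeriv 1 u) t₀ T))
    (hΦ : ∀ j, 2 ≤ j → j ≤ n → ‖spatialDeriv j Φ (x, s)‖ ≤
      backToLabelsConst j * (s - t₀) * slabSupNorm (spatialDeriv j u) t₀ T *
        exp (backToLabelsConst j * (s - t₀) * slabSupNorm (spatialDeriv 1 u) t₀ T)) :
    ∑ i ∈ Finset.range n, ((n + 1).choose i : ℝ) *
        (‖spatialDeriv (i + 1) Φ (x, s)‖ * ‖spatialDeriv (n + 1 - i) u (x, s)‖) ≤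
      2 ^ (n + 1) * (8 ^ (n ^ 2) * backToLabelsConst n *
        slabSupNorm (spatialDeriv (n + 1) u) t₀ T *
          exp ((backToLabelsConst n + 1) * τ * slabSupNorm (spatialDeriv 1 u) t₀ T)) := by
  have hU₁ := slabSupNorm_nonneg (spatialDeriv 1 u) t₀ T
  have hUN := slabSupNorm_nonneg (spatialDeriv (n + 1) u) t₀ T
  have hC := one_le_backToLabelsConst n
  refine (Finset.sum_le_sum fun i _ => ?_).trans <|
    (leibniz_sum_le (U := fun k => slabSupNorm (spatialDeriv k u) t₀ T)
      (P := fun k => ‖spatialDeriv k Φ (x, s)‖) (fun k => slabSupNorm_nonneg _ _ _)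
      (sub_nonneg.2 hs.1) (fun k hk => ?_) hΦ₁ hΦ).trans (by gcongr)
  · gcongr
    exact (hbounded _ (Nat.sub_le _ _)).norm_le_slabSupNorm x hs
  · exact sq_slabSupNorm_spatialDeriv_succ_le (hu.of_le (by norm_cast; lia))
      (hbounded _ (by lia)) (hbounded _ (by lia))

variable [CompleteSpace E]

theorem norm_spatialDeriv_one_le_exp (hu : ContDiff ℝ 1 u) (hΦ : ContDiff ℝ 2 Φ)
    (hu₀ : BoundedOnSlab u t₀ T) (hu₁ : BoundedOnSlab (spatialDeriv 1 u) t₀ T)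
    (hinit : ∀ x, Φ (x, t₀) = x)
    (htransport : ∀ x, ∀ s ∈ Icc t₀ T, materialDeriv u Φ (x, s) = 0) (x : E) {t : ℝ}
    (ht : t ∈ Icc t₀ T) :
    ‖spatialDeriv 1 Φ (x, t)‖ ≤ exp ((t - t₀) * slabSupNorm (spatialDeriv 1 u) t₀ T) := by
  simpa [mul_comm] using norm_spatialDeriv_le_of_lower_terms_le (n := 0) (ε := 0) (c := 1)
    (mod_cast hu) (mod_cast hΦ) hu₀ hu₁ htransport ht
    (norm_spatialDeriv_one_le_one_of_eq_id hinit) (by simp) x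

theorem back_to_labels_higher_derivative_estimate_general {N : ℕ} (hN : 2 ≤ N)
    (hu : ContDiff ℝ N u) (hbounded : ∀ k ≤ N, BoundedOnSlab (spatialDeriv k u) t₀ T)
    (hΦ : ContDiff ℝ (N + 1 : ℕ) Φ) (hinit : ∀ x, Φ (x, t₀) = x)
    (htransport : ∀ x, ∀ s ∈ Icc t₀ T, materialDeriv u Φ (x, s) = 0) (x : E) {t : ℝ}
    (ht : t ∈ Icc t₀ T) :
    ‖spatialDeriv N Φ (x, t)‖ ≤
      backToLabelsConst N * (t - t₀) * slabSupNorm (spatialDeriv N u) t₀ T *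
        exp (backToLabelsConst N * (t - t₀) * slabSupNorm (spatialDeriv 1 u) t₀ T) := by
  induction N using Nat.strong_induction_on generalizing x t with
  | _ N ih =>
  obtain ⟨n, rfl⟩ : ∃ n, N = n + 1 := Nat.exists_eq_add_of_le' (by lia)
  have hu₀ : BoundedOnSlab u t₀ T := by
    simpa [BoundedOnSlab, spatialDeriv] using hbounded 0 (by lia)
  have hu₁ := hbounded 1 (by lia)
  have hDΦ (y : E) {s : ℝ} (hs : s ∈ Icc t₀ T) :=
    norm_spatialDeriv_one_le_exp (hu.of_le (by norm_cast; lia)) (hΦ.of_le (by norm_cast; lia))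
      hu₀ hu₁ hinit htransport y hs
  have hlower (y : E) (s : ℝ) (hs : s ∈ Icc t₀ t) :=
    have hsT : s ∈ Icc t₀ T := ⟨hs.1, hs.2.trans ht.2⟩
    leibniz_sum_spatialDeriv_le hu hbounded hsT (sub_le_sub_right hs.2 t₀) (hDΦ y hsT)
      fun j hj hjn => ih j (by lia) hj (hu.of_le (by norm_cast; lia))
        (fun k hk => hbounded k (by lia)) (hΦ.of_le (by norm_cast; lia)) y hsT
  have hgronwall := norm_spatialDeriv_le_of_lower_terms_le hu hΦ hu₀ hu₁ htransport ht
    (fun y => (norm_eq_zero.2 (spatialDeriv_eq_zero_of_eq_id hinit hN y)).le) hlower x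
  rw [zero_add] at hgronwall
  exact hgronwall.trans (mul_exp_le_backToLabelsConst (sub_nonneg.2 ht.1)
    (slabSupNorm_nonneg _ _ _) (slabSupNorm_nonneg _ _ _))

end BackToLabels

section Periodic

theorem periodic_of_mem_span_int {G α : Type*} [AddCommGroup G] {f : G → α} {S : Set G}
    (hf : ∀ c ∈ S, Function.Periodic f c) {c : G} (hc : c ∈ Submodule.span ℤ S) :
    Function.Periodic f c := by
  induction hc using Submodule.span_induction with
  | mem c hc => exact hf c hc
  | zero => simp [Function.Periodic]
  | add c d _ _ hc hd => exact hc.add_period hd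
  | smul n c _ hc => exact hc.zsmul n

variable {E F ι : Type*} [NormedAddCommGroup E] [NormedSpace ℝ E]

theorem boundedOnSlab_of_periodic [Finite ι] [SeminormedAddCommGroup F] (b : Module.Basis ι ℝ E)
    {G : E × ℝ → F} (hG : Continuous G)
    (hper : ∀ t i, Function.Periodic (fun x => G (x, t)) (b i)) (t₀ T : ℝ) :
    BoundedOnSlab G t₀ T := by
  cases nonempty_fintype ι
  have : FiniteDimensional ℝ E := b.finiteDimensional_of_finite
  have : ProperSpace E := FiniteDimensional.proper_real E
  obtain ⟨M, hM⟩ := ((ZSpan.fundamentalDomain_isBounded b).isCompact_closure.prod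
    (isCompact_Icc (a := t₀) (b := T))).exists_bound_of_continuousOn hG.continuousOn
  refine ⟨M, fun x t ht => ?_⟩
  have hfract : G (ZSpan.fract b x, t) = G (x, t) :=
    (periodic_of_mem_span_int (forall_mem_range.2 (hper t)) (ZSpan.floor b x).2).sub_eq x
  rw [← hfract]
  exact hM _ ⟨subset_closure (ZSpan.fract_mem_fundamentalDomain b x), ht⟩

theorem periodic_spatialDeriv [NormedAddCommGroup F] [NormedSpace ℝ F] {u : E × ℝ → F} {t : ℝ}
    {c : E} (hu : Function.Periodic (fun x => u (x, t)) c) (k : ℕ) :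
    Function.Periodic (fun x => spatialDeriv k u (x, t)) c := fun x =>
  (iteratedFDeriv_comp_add_right k c x).symm.trans (congrArg (iteratedFDeriv ℝ k · x) hu.funext)

theorem boundedOnSlab_spatialDeriv_of_periodic [Finite ι] [NormedAddCommGroup F] [NormedSpace ℝ F]
    (b : Module.Basis ι ℝ E) {u : E × ℝ → F} {k : ℕ} (hu : ContDiff ℝ k u)
    (hper : ∀ t i, Function.Periodic (fun x => u (x, t)) (b i)) (t₀ T : ℝ) :
    BoundedOnSlab (spatialDeriv k u) t₀ T :=
  boundedOnSlab_of_periodic b (contDiff_spatialDeriv (m := 0) hu (by simp)).continuous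
    (fun t i => periodic_spatialDeriv (hper t i) k) t₀ T

end Periodic

/-- Higher-derivative estimate for the back-to-labels map `Φ`, solving
`∂ₜ Φ + u·∇Φ = 0`, `Φ(x,t₀) = x` (with a constant `C = C(N)`):
`‖D^N Φ(·,t)‖_{C⁰} ≤ C (t−t₀) ‖D^N u‖_{C⁰} e^{C (t−t₀) ‖Du‖_{C⁰}}`. -/
theorem back_to_labels_higher_derivative_estimate :
    ∀ N : ℕ, 2 ≤ N → ∃ C : ℝ,
    ∀ (t₀ T : ℝ), t₀ < T →
    ∀ (u : E2 × ℝ → E2) (Φ : E2 × ℝ → E2),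
    ContDiff ℝ (⊤ : ℕ∞) u →
    (∀ (x : E2) (t : ℝ) (i : Fin 2),
      u (x + (2 * π) • EuclideanSpace.single i 1, t) = u (x, t)) →
    ContDiff ℝ (⊤ : ℕ∞) Φ →
    (∀ (x : E2) (t : ℝ) (i : Fin 2),
      Φ (x + (2 * π) • EuclideanSpace.single i 1, t) - (x + (2 * π) • EuclideanSpace.single i 1)
        = Φ (x, t) - x) →
    (∀ x, Φ (x, t₀) = x) →
    (∀ (x : E2), ∀ t ∈ Set.Icc t₀ T,
      deriv (fun s => Φ (x, s)) t + fderiv ℝ (fun y => Φ (y, t)) x (u (x, t)) = 0) →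
    ∀ t ∈ Set.Icc t₀ T,
      (⨆ x : E2, ‖iteratedFDeriv ℝ N (fun y => Φ (y, t)) x‖)
        ≤ C * (t - t₀) * supDNu N u t₀ T * Real.exp (C * (t - t₀) * supDu u t₀ T) := by
  refine fun N hN => ⟨backToLabelsConst N, ?_⟩
  intro t₀ T _ u Φ hu huper hΦ _ hinit htransport t ht
  have hsupDu : supDu u t₀ T = slabSupNorm (spatialDeriv 1 u) t₀ T := by
    simp only [supDu, slabSupNorm, spatialDeriv, norm_iteratedFDeriv_one]
  let b : Module.Basis (Fin 2) ℝ E2 := (EuclideanSpace.basisFun (Fin 2) ℝ).toBasis.isUnitSMul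
    (w := fun _ => 2 * π) fun _ => two_pi_pos.ne'.isUnit
  have hbounded (k : ℕ) : BoundedOnSlab (spatialDeriv k u) t₀ T :=
    boundedOnSlab_spatialDeriv_of_periodic b (hu.of_le (mod_cast le_top))
      (fun s i x => by simpa [b, Module.Basis.isUnitSMul_apply] using huper x s i) t₀ T
  have hmaterial (x : E2) (s : ℝ) (hs : s ∈ Icc t₀ T) : materialDeriv u Φ (x, s) = 0 :=
    (materialDeriv_apply (hΦ.differentiable (by simp) _)).trans (htransport x s hs)
  rw [hsupDu]
  exact ciSup_le fun x => back_to_labels_higher_derivative_estimate_general hN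
    (hu.of_le (mod_cast le_top)) (fun k _ => hbounded k) (hΦ.of_le (mod_cast le_top)) hinit
    hmaterial x ht
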